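/- arXiv:1902.09880 — 3 statements merged into one kernel-verified Lean document; each statement's English description precedes it below -/
import Mathlib

section
/- Let L = (S, ι, →) be an LTS and let norm(L) = (S', ι', →') be its normal form. For all sequences ρ ∈ Act* and all states U ∈ S' such that ι' ⟶ρ U in norm(L), it holds that ι ⇒ρ s in L for every s ∈ U. -/
/-- A labelled transition system with states `S` and visible actions `Act`.
Transition labels are `Option Act`, where `none` plays the role of the
internal action τ and `some a` is the visible action `a ∈ Act`. -/
structure LTS (S : Type*) (Act : Type*) where
  init : S
  tr : S → Option Act → S → Prop

namespace LTS

variable {S S₁ S₂ : Type*} {Act : Type*}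

/-- The trace relation: `s ⟶ε t` iff `s = t`, and `s ⟶(σ a) t` iff
`s ⟶σ u` and `u —a→ t` for some `u`. -/
inductive Trace (L : LTS S Act) : S → List (Option Act) → S → Prop
  | nil (s : S) : Trace L s [] s
  | snoc {s u t : S} {σ : List (Option Act)} {a : Option Act} :
      Trace L s σ u → L.tr u a t → Trace L s (σ ++ [a]) t

/-- The weak transition relation `s ⇒ρ t` for `ρ ∈ Act*`. -/
inductive Weak (L : LTS S Act) : S → List Act → S → Prop
  | refl (s : S) : Weak L s [] s
  | tau {s t : S} : L.tr s none t → Weak L s [] t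
  | act {s t : S} {a : Act} : L.tr s (some a) t → Weak L s [a] t
  | comp {s u t : S} {ρ σ : List Act} :
      Weak L s ρ u → Weak L u σ t → Weak L s (ρ ++ σ) t

/-- A state is reachable iff some trace leads from the initial state to it. -/
def Reachable (L : LTS S Act) (s : S) : Prop := ∃ σ, L.Trace L.init σ s

/-- A state is stable iff it has no outgoing τ-transition. -/
def Stable (L : LTS S Act) (s : S) : Prop := ¬ ∃ t, L.tr s none t

/-- A state diverges iff there is an infinite sequence of τ-transitions from it. -/
def Diverges (L : LTS S Act) (s : S) : Prop :=
  ∃ f : ℕ → S, f 0 = s ∧ ∀ n, L.tr (f n) none (f (n + 1))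

/-- The weak traces of an LTS. -/
def weaktraces (L : LTS S Act) : Set (List Act) := {ρ | ∃ t, L.Weak L.init ρ t}

/-- The divergences of an LTS: all `ρ σ` such that `ι ⇒ρ t` for a diverging `t`. -/
def divergences (L : LTS S Act) : Set (List Act) :=
  {w | ∃ ρ σ : List Act, w = ρ ++ σ ∧ ∃ t, L.Weak L.init ρ t ∧ L.Diverges t}

/-- The refusals of a (stable) state: all sets `X` of visible actions none of
which is enabled in `s`. -/
def refusals (L : LTS S Act) (s : S) : Set (Set Act) :=
  {X | ∀ a ∈ X, ¬ ∃ t, L.tr s (some a) t}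

/-- The refusals of a set of states. -/
def refusalsSet (L : LTS S Act) (U : Set S) : Set (Set Act) :=
  {X | ∃ s ∈ U, L.Stable s ∧ X ∈ L.refusals s}

/-- The stable failures of an LTS. -/
def failures (L : LTS S Act) : Set (List Act × Set Act) :=
  {p | ∃ t, L.Weak L.init p.1 t ∧ L.Stable t ∧ p.2 ∈ L.refusals t}

/-- The failures with post-divergence details obscured. -/
def failuresBot (L : LTS S Act) : Set (List Act × Set Act) :=
  L.failures ∪ {p | p.1 ∈ L.divergences}

/-- The normal form of an LTS. -/
def norm (L : LTS S Act) : LTS (Set S) Act where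
  init := {s | L.Weak L.init [] s}
  tr U a V := ∃ b : Act, a = some b ∧ V = {t | ∃ s ∈ U, L.Weak s [b] t}

/-- The failures-divergences normal form of an LTS. -/
def normFdr (L : LTS S Act) : LTS (Set S) Act where
  init := {s | L.Weak L.init [] s}
  tr U a V := ∃ b : Act, a = some b ∧ (¬ ∃ s ∈ U, L.Diverges s) ∧
      V = {t | ∃ s ∈ U, L.Weak s [b] t}

/-- The product of two LTSs. -/
def prod (L₁ : LTS S₁ Act) (L₂ : LTS S₂ Act) : LTS (S₁ × S₂) Act where
  init := (L₁.init, L₂.init)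
  tr p a q :=
    (a = none ∧ q.1 = p.1 ∧ L₂.tr p.2 none q.2) ∨
    (∃ b : Act, a = some b ∧ L₁.tr p.1 (some b) q.1 ∧ L₂.tr p.2 (some b) q.2)

end LTS

namespace LTS

variable {S Act : Type*} {L : LTS S Act}

theorem trace_nil_iff {s t : S} : L.Trace s [] t ↔ s = t := by
  constructor
  · intro h
    generalize hw : ([] : List (Option Act)) = w at h
    cases h with
    | nil => rfl
    | snoc => simp at hw
  · rintro rfl
    exact .nil s

theorem trace_append_singleton_iff {s t : S} {σ : List (Option Act)} {a : Option Act} :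
    L.Trace s (σ ++ [a]) t ↔ ∃ u, L.Trace s σ u ∧ L.tr u a t := by
  constructor
  · intro h
    generalize hw : σ ++ [a] = w at h
    cases h with
    | nil => simp at hw
    | snoc hσ ha =>
      obtain ⟨rfl, rfl⟩ := List.append_singleton_inj.mp hw
      exact ⟨_, hσ, ha⟩
  · rintro ⟨u, hσ, ha⟩
    exact .snoc hσ ha

theorem norm_tr_some_iff {U V : Set S} {a : Act} :
    L.norm.tr U (some a) V ↔ V = {t | ∃ s ∈ U, L.Weak s [a] t} := by
  simp [norm]

theorem exists_weak_of_norm_trace {U V : Set S} {ρ : List Act}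
    (h : L.norm.Trace U (ρ.map some) V) {t : S} (ht : t ∈ V) : ∃ s ∈ U, L.Weak s ρ t := by
  induction ρ using List.reverseRecOn generalizing V t with
  | nil =>
    obtain rfl := trace_nil_iff.mp h
    exact ⟨t, ht, .refl t⟩
  | append_singleton ρ a ih =>
    rw [List.map_append, List.map_singleton, trace_append_singleton_iff] at h
    obtain ⟨W, hW, ha⟩ := h
    obtain rfl := norm_tr_some_iff.mp ha
    obtain ⟨u, hu, hut⟩ := ht
    obtain ⟨s, hs, hsu⟩ := ih hW hu
    exact ⟨s, hs, hsu.comp hut⟩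

end LTS

/-- every state of a normal form state reached via `ρ` is reached
via the weak trace `ρ` in the original LTS. -/
theorem norm_trace_mem_weak {S Act : Type*} (L : LTS S Act) :
    ∀ (ρ : List Act) (U : Set S),
      (L.norm).Trace (L.norm).init (ρ.map some) U →
        ∀ s ∈ U, L.Weak L.init ρ s := by
  intro ρ U hU s hs
  obtain ⟨s₀, hs₀, hs₀s⟩ := LTS.exists_weak_of_norm_trace hU hs
  exact LTS.Weak.comp hs₀ hs₀s
end

section
/- Let L = (S, ι, →) be an LTS and let norm_fdr(L) = (S', ι', →') be its failures-divergences normal form. For all sequences ρ ∈ Act* such that either ρ ∉ divergences(L) or ρ is a minimal divergence of L, and for all states s ∈ S with ι ⇒ρ s, there is a state U ∈ S' such that s ∈ U and ι' ⟶ρ U in norm_fdr(L). -/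
/-!
Along `ρ` the failures-divergences normal form reaches exactly the set of states that `ι` weakly
reaches via `ρ`. Extending `ρ` by an action `a` agrees with one step of the normal form, because a
weak transition via `ρ ++ [a]` factors through a state weakly reached via `ρ`. Such a step is
blocked only by a diverging state, and that state would make a strict prefix of the whole sequence
a divergence.
-/

namespace LTS

variable {S Act : Type*} {L : LTS S Act}

theorem weak_append_iff {s t : S} {ρ σ : List Act} :
    L.Weak s (ρ ++ σ) t ↔ ∃ u, L.Weak s ρ u ∧ L.Weak u σ t := by
  refine ⟨fun h ↦ ?_, fun ⟨_, hρ, hσ⟩ ↦ hρ.comp hσ⟩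
  generalize hw : ρ ++ σ = w at h
  induction h generalizing ρ σ with
  | refl s =>
    obtain ⟨rfl, rfl⟩ := List.append_eq_nil_iff.1 hw
    exact ⟨s, .refl s, .refl s⟩
  | @tau s t hst =>
    obtain ⟨rfl, rfl⟩ := List.append_eq_nil_iff.1 hw
    exact ⟨s, .refl s, .tau hst⟩
  | @act s t a hst =>
    rcases List.append_eq_singleton_iff.1 hw with ⟨rfl, rfl⟩ | ⟨rfl, rfl⟩
    · exact ⟨s, .refl s, .act hst⟩
    · exact ⟨t, .act hst, .refl t⟩
  | comp hsu hut ih_su ih_ut =>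
    rcases List.append_eq_append_iff.1 hw with ⟨m, rfl, rfl⟩ | ⟨m, rfl, rfl⟩
    · obtain ⟨v, hsv, hvu⟩ := ih_su rfl
      exact ⟨v, hsv, hvu.comp hut⟩
    · obtain ⟨v, huv, hvt⟩ := ih_ut rfl
      exact ⟨v, hsu.comp huv, hvt⟩

theorem mem_divergences_of_prefix {ρ σ : List Act} (hρ : ρ ∈ L.divergences) (h : ρ <+: σ) :
    σ ∈ L.divergences := by
  obtain ⟨ρ₀, ρ₁, rfl, ht⟩ := hρ
  obtain ⟨τ, rfl⟩ := h
  exact ⟨ρ₀, ρ₁ ++ τ, List.append_assoc .., ht⟩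

/-- The set of states weakly reached from the initial state via `ρ`, serving as the state
that the failures-divergences normal form reaches along `ρ`. -/
def weakReach (L : LTS S Act) (ρ : List Act) : Set S := {t | L.Weak L.init ρ t}

theorem weakReach_append (ρ σ : List Act) :
    L.weakReach (ρ ++ σ) = {t | ∃ s ∈ L.weakReach ρ, L.Weak s σ t} :=
  Set.ext fun _ ↦ weak_append_iff

theorem not_diverges_of_mem_weakReach {ρ : List Act} {s : S} (hρ : ρ ∉ L.divergences)
    (hs : s ∈ L.weakReach ρ) : ¬ L.Diverges s :=
  fun hdiv ↦ hρ ⟨ρ, [], (List.append_nil ρ).symm, s, hs, hdiv⟩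

theorem normFdr_tr_weakReach {ρ : List Act} (hρ : ρ ∉ L.divergences) (a : Act) :
    L.normFdr.tr (L.weakReach ρ) (some a) (L.weakReach (ρ ++ [a])) :=
  ⟨a, rfl, fun ⟨_, hs, hdiv⟩ ↦ not_diverges_of_mem_weakReach hρ hs hdiv, weakReach_append ρ [a]⟩

theorem normFdr_trace_weakReach {ρ : List Act}
    (hρ : ∀ ρ' : List Act, ρ' <+: ρ → ρ' ≠ ρ → ρ' ∉ L.divergences) :
    L.normFdr.Trace L.normFdr.init (ρ.map some) (L.weakReach ρ) := by
  induction ρ using List.reverseRecOn with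
  | nil => exact .nil _
  | append_singleton ρ a ih =>
    have not_mem_of_prefix {ρ' : List Act} (hp : ρ' <+: ρ) : ρ' ∉ L.divergences := by
      refine hρ ρ' (hp.trans (List.prefix_append ρ [a])) ?_
      rintro rfl
      simpa using hp.length_le
    rw [List.map_append]
    exact (ih fun _ hp _ ↦ not_mem_of_prefix hp).snoc
      (normFdr_tr_weakReach (not_mem_of_prefix List.prefix_rfl) a)

end LTS

/-- for sequences `ρ` that are not divergences, or are minimal
divergences, every state reached via `ρ` is contained in a state of the
failures-divergences normal form reachable via `ρ`. -/
theorem normFdr_trace_exists {S Act : Type*} (L : LTS S Act) :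
    ∀ ρ : List Act,
      (ρ ∉ L.divergences ∨
        (ρ ∈ L.divergences ∧ ∀ ρ' : List Act, ρ' <+: ρ → ρ' ≠ ρ → ρ' ∉ L.divergences)) →
      ∀ s : S, L.Weak L.init ρ s →
        ∃ U : Set S, s ∈ U ∧ (L.normFdr).Trace (L.normFdr).init (ρ.map some) U := by
  intro ρ hρ s hs
  refine ⟨L.weakReach ρ, hs, LTS.normFdr_trace_weakReach ?_⟩
  rcases hρ with hnot | ⟨_, hmin⟩
  · exact fun _ hp _ hdiv ↦ hnot (LTS.mem_divergences_of_prefix hdiv hp)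
  · exact hmin
end

section
/- Let L1, L2 be LTSs. For all states (U, s) and (V, s) of the product norm_fdr(L1) ⋉ L2 with U ⊆ V, and for every sequence σ ∈ Act_τ*: if (V, s) can reach an FD-witness by following σ (i.e., (V, s) ⟶σ (V', t) for some FD-witness (V', t)), then (U, s) can reach an FD-witness by following σ as well, where a product state (U, s) is an FD-witness iff no state of U diverges and at least one of the following holds: U = ∅; s is stable and refusals(s) ⊄ refusals(U); or s diverges. -/
/-- An FD-witness: no state of `U` diverges, and `U = ∅`, or `s` is stable and
some refusal of `s` is not a refusal of `U`, or `s` diverges. -/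
def FDwitness {S₁ S₂ Act : Type*} (L₁ : LTS S₁ Act) (L₂ : LTS S₂ Act)
    (p : Set S₁ × S₂) : Prop :=
  (¬ ∃ u ∈ p.1, L₁.Diverges u) ∧
    (p.1 = ∅ ∨ (L₂.Stable p.2 ∧ ¬ L₂.refusals p.2 ⊆ L₁.refusalsSet p.1) ∨
      L₂.Diverges p.2)

/-!
The normal form moves from a set of states to the set of its weak successors, and this move is
blocked only when some state of the set diverges. Subsets of a divergence-free set are
divergence-free, so a set is simulated by each of its subsets, with the inclusion preserved along
the way. Being an FD-witness passes from a set to its subsets as well: the fewer states there are,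
the fewer refusals they offer to match those of the other component.
-/

namespace LTS

variable {S S' S₁ S₁' S₂ Act : Type*}

/-- `R` is a strong simulation of `L` by `L'`: each step of `L` is matched by an equally labelled
step of `L'` between related states, where τ is treated like any other label. The initial states
need not be related. -/
def IsSimulation (L : LTS S Act) (L' : LTS S' Act) (R : S → S' → Prop) : Prop :=
  ∀ ⦃s s' a t⦄, R s s' → L.tr s a t → ∃ t', L'.tr s' a t' ∧ R t t'

theorem IsSimulation.exists_trace {L : LTS S Act} {L' : LTS S' Act} {R : S → S' → Prop}
    (hR : L.IsSimulation L' R) {s t : S} {s' : S'} {σ : List (Option Act)}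
    (hσ : L.Trace s σ t) (hs : R s s') : ∃ t', L'.Trace s' σ t' ∧ R t t' := by
  induction hσ with
  | nil => exact ⟨s', .nil s', hs⟩
  | snoc _ hstep ih =>
    obtain ⟨u', hσ', hu⟩ := ih
    obtain ⟨t', hstep', ht⟩ := hR hu hstep
    exact ⟨t', hσ'.snoc hstep', ht⟩

theorem IsSimulation.prod_right {L₁ : LTS S₁ Act} {L₁' : LTS S₁' Act} {R : S₁ → S₁' → Prop}
    (hR : L₁.IsSimulation L₁' R) (L₂ : LTS S₂ Act) :
    (L₁.prod L₂).IsSimulation (L₁'.prod L₂) fun p p' => R p.1 p'.1 ∧ p.2 = p'.2 := by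
  rintro ⟨s₁, s₂⟩ ⟨s₁', _⟩ a ⟨t₁, t₂⟩ ⟨hs, rfl⟩ (⟨ha, rfl, hτ⟩ | ⟨b, ha, hb₁, hb₂⟩)
  · exact ⟨(s₁', t₂), .inl ⟨ha, rfl, hτ⟩, hs, rfl⟩
  · obtain ⟨t₁', hb₁', ht⟩ := hR hs hb₁
    exact ⟨(t₁', t₂), .inr ⟨b, ha, hb₁', hb₂⟩, ht, rfl⟩

theorem not_exists_diverges_anti {L : LTS S Act} {U V : Set S} (hUV : U ⊆ V)
    (hV : ¬ ∃ s ∈ V, L.Diverges s) : ¬ ∃ s ∈ U, L.Diverges s :=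
  fun ⟨s, hs, hdiv⟩ => hV ⟨s, hUV hs, hdiv⟩

theorem refusalsSet_mono (L : LTS S Act) : Monotone L.refusalsSet :=
  fun _ _ hUV _ ⟨s, hs, hX⟩ => ⟨s, hUV hs, hX⟩

theorem isSimulation_normFdr_superset (L : LTS S Act) :
    L.normFdr.IsSimulation L.normFdr (· ⊇ ·) := by
  rintro V U _ _ hUV ⟨b, rfl, hV, rfl⟩
  exact ⟨{t | ∃ s ∈ U, L.Weak s [b] t}, ⟨b, rfl, not_exists_diverges_anti hUV hV, rfl⟩,
    fun _ ⟨s, hs, hst⟩ => ⟨s, hUV hs, hst⟩⟩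

end LTS

theorem FDwitness.anti {S₁ S₂ Act : Type*} {L₁ : LTS S₁ Act} {L₂ : LTS S₂ Act} {U V : Set S₁}
    {s : S₂} (hUV : U ⊆ V) (hV : FDwitness L₁ L₂ (V, s)) : FDwitness L₁ L₂ (U, s) := by
  obtain ⟨hdiv, hwit⟩ := hV
  refine ⟨LTS.not_exists_diverges_anti hUV hdiv, ?_⟩
  rcases hwit with hempty | ⟨hstable, hrefusals⟩ | hdiv₂
  · exact .inl (Set.subset_eq_empty hUV hempty)
  · exact .inr (.inl ⟨hstable, fun hsub => hrefusals (hsub.trans (L₁.refusalsSet_mono hUV))⟩)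
  · exact .inr (.inr hdiv₂)

/-- if a larger product state can reach an FD-witness by
following `σ`, so can the smaller one. -/
theorem FDwitness_reach_mono {S₁ S₂ Act : Type*} (L₁ : LTS S₁ Act) (L₂ : LTS S₂ Act) :
    ∀ (U V : Set S₁) (s : S₂), U ⊆ V →
      ∀ σ : List (Option Act),
        (∃ q : Set S₁ × S₂, ((L₁.normFdr).prod L₂).Trace (V, s) σ q ∧ FDwitness L₁ L₂ q) →
        (∃ q : Set S₁ × S₂, ((L₁.normFdr).prod L₂).Trace (U, s) σ q ∧ FDwitness L₁ L₂ q) := by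
  rintro U V s hUV σ ⟨⟨V', t⟩, hσ, hwit⟩
  obtain ⟨⟨U', _⟩, hσ', hUV', rfl⟩ :=
    (L₁.isSimulation_normFdr_superset.prod_right L₂).exists_trace (s' := (U, s)) hσ ⟨hUV, rfl⟩
  exact ⟨(U', t), hσ', hwit.anti hUV'⟩
end
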